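/- Let p be a positive integer, let J ⊆ Δ, let λ ∈ C_ℤ, let w1, w2 ∈ ᴶW, let w ∈ W_J, and let σ ∈ ℤΦ. If w1·λ = (w w2)·λ + pσ, then σ = 0, w is the identity, and w1 = w2. -/

import Mathlib

/-!
Put `x = λ + ρ`. The hypothesis reads `w₁ x = w w₂ x + p σ`, where `x` lies in the open bottom
`p`-alcove, i.e. `|⟨x, γ∨⟩| < p` for every root `γ`, and `⟨x, γ∨⟩ > 0` exactly for `γ` positive.

*`σ = 0`.* Pairing with `β∨` gives `p ⟨σ, β∨⟩ = ⟨x, (w₁⁻¹β)∨⟩ - ⟨x, ((w w₂)⁻¹β)∨⟩`, which has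
absolute value `< 2p`; being an integer, `⟨σ, β∨⟩` is in `{-1, 0, 1}` for every root `β`. An element
of the root lattice with this property vanishes (`eq_zero_of_minuscule`): write `σ` as a sum of
`k` roots; if `σ ≠ 0` some summand `β` has `⟨σ, β∨⟩ > 0`, hence `= 1`, and then `σ - β = s_β σ` is a
sum of `k - 1` roots with the same property, so induction applies.

*`w₁ = w w₂`.* The element `w₁⁻¹ w w₂` fixes `x`, hence preserves the positive roots, and an
element of the Weyl group preserving the positive roots is trivial (`eq_one_of_preserves_pos`).
This is the classical argument: `W` is generated by simple reflections (`weyl_le_weyl_base`), and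
a word of simple reflections can be shortened when its product sends a simple root to a negative
one (`exchange`).

*`w = 1`.* As an element of `W_J`, `w` preserves the positive roots outside `Φ_J`. It also preserves
those in `Φ_J`: both `w₁⁻¹` and `w₂⁻¹ = w₁⁻¹ w` send these to positive roots. So `w` preserves all
positive roots and is trivial.
-/

open scoped RealInnerProductSpace

namespace PaperDNN

variable {E : Type*} [NormedAddCommGroup E] [InnerProductSpace ℝ E]

/-- The coroot pairing `⟨x, α∨⟩ = 2⟪x,α⟫/⟪α,α⟫`. -/
noncomputable def pair (x a : E) : ℝ := 2 * ⟪x, a⟫ / ⟪a, a⟫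

/-- `Φ` is a reduced irreducible root system in the Euclidean space `E`. -/
structure IsRootSystem (Φ : Finset E) : Prop where
  nonempty : Φ.Nonempty
  ne_zero : ∀ α ∈ Φ, α ≠ 0
  span_top : Submodule.span ℝ (Φ : Set E) = ⊤
  reduced : ∀ α ∈ Φ, ∀ t : ℝ, t • α ∈ Φ → t = 1 ∨ t = -1
  reflect_mem : ∀ α ∈ Φ, ∀ β ∈ Φ, β - pair β α • α ∈ Φ
  pair_int : ∀ α ∈ Φ, ∀ β ∈ Φ, ∃ n : ℤ, pair β α = (n : ℝ)
  irred : ∀ S T : Set E, S ∪ T = (Φ : Set E) → S.Nonempty → T.Nonempty →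
      (∀ a ∈ S, ∀ b ∈ T, ⟪a, b⟫ = 0) → False

/-- `Δ` is a base of simple roots for `Φ`: every root is a nonnegative or
nonpositive integral combination of the simple roots. -/
structure IsBase (Φ Δ : Finset E) : Prop where
  subset : Δ ⊆ Φ
  indep : LinearIndependent ℝ (fun a : {x // x ∈ Δ} => (a : E))
  root_decomp : ∀ β ∈ Φ, (∃ c : E → ℕ, β = ∑ α ∈ Δ, (c α : ℝ) • α) ∨
      (∃ c : E → ℕ, β = -(∑ α ∈ Δ, (c α : ℝ) • α))

open Classical in
/-- The positive roots `Φ⁺` of `Φ` with respect to the base `Δ`. -/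
noncomputable def posRoots (Φ Δ : Finset E) : Finset E :=
  Φ.filter fun β => ∃ c : E → ℕ, β = ∑ α ∈ Δ, (c α : ℝ) • α

/-- `ρ`, one-half the sum of the positive roots. -/
noncomputable def rho (Φ Δ : Finset E) : E := (2⁻¹ : ℝ) • ∑ β ∈ posRoots Φ Δ, β

/-- The Weyl group of `Φ`, the subgroup of `GL(E)` generated by the reflections
`s_α : x ↦ x − ⟨x,α∨⟩α` in the roots `α ∈ Φ`.  Applied to a subset `J` of the
simple roots it yields the parabolic subgroup `W_J`. -/
def Weyl (Φ : Finset E) : Subgroup (E ≃ₗ[ℝ] E) :=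
  Subgroup.closure { w : E ≃ₗ[ℝ] E | ∃ α ∈ Φ, ∀ x, w x = x - pair x α • α }

/-- The dot action `w·λ = w(λ+ρ) − ρ`. -/
noncomputable def dotAct (Φ Δ : Finset E) (w : E ≃ₗ[ℝ] E) (lam : E) : E :=
  w (lam + rho Φ Δ) - rho Φ Δ

/-- The weight lattice `X = {λ ∈ E : ⟨λ,α∨⟩ ∈ ℤ for all α ∈ Φ}`. -/
def weightLattice (Φ : Finset E) : Set E :=
  { lam | ∀ α ∈ Φ, ∃ n : ℤ, pair lam α = (n : ℝ) }

/-- The root lattice `ℤΦ`. -/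
def rootLattice (Φ : Finset E) : AddSubgroup E := AddSubgroup.closure (Φ : Set E)

/-- The bottom `p`-alcove `C_ℤ = {λ ∈ X : 0 < ⟨λ+ρ,β∨⟩ < p for all β ∈ Φ⁺}`. -/
def bottomAlcove (Φ Δ : Finset E) (p : ℕ) : Set E :=
  { lam ∈ weightLattice Φ | ∀ β ∈ posRoots Φ Δ,
      0 < pair (lam + rho Φ Δ) β ∧ pair (lam + rho Φ Δ) β < (p : ℝ) }

/-- The closure `C̄_ℤ = {λ ∈ X : 0 ≤ ⟨λ+ρ,β∨⟩ ≤ p for all β ∈ Φ⁺}` of the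
bottom `p`-alcove. -/
def closedAlcove (Φ Δ : Finset E) (p : ℕ) : Set E :=
  { lam ∈ weightLattice Φ | ∀ β ∈ posRoots Φ Δ,
      0 ≤ pair (lam + rho Φ Δ) β ∧ pair (lam + rho Φ Δ) β ≤ (p : ℝ) }

/-- Membership in `X⁺`, the set of dominant weights. -/
def isDominant (Φ Δ : Finset E) (lam : E) : Prop :=
  lam ∈ weightLattice Φ ∧ ∀ α ∈ Δ, 0 ≤ pair lam α

/-- `a₀` is the highest short root of `Φ`: a root of minimal length such that
every root of the same length is `≤ a₀` (their difference is a nonnegative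
integral combination of simple roots). -/
structure IsHighestShortRoot (Φ Δ : Finset E) (a₀ : E) : Prop where
  mem : a₀ ∈ Φ
  short : ∀ β ∈ Φ, ⟪a₀, a₀⟫ ≤ ⟪β, β⟫
  highest : ∀ β ∈ Φ, ⟪β, β⟫ = ⟪a₀, a₀⟫ →
      ∃ c : E → ℕ, a₀ - β = ∑ α ∈ Δ, (c α : ℝ) • α

/-! ### Reflections and the Weyl group -/

lemma pair_add (x y a : E) : pair (x + y) a = pair x a + pair y a := by
  simp only [pair, inner_add_left]; ring

lemma pair_sub (x y a : E) : pair (x - y) a = pair x a - pair y a := by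
  simp only [pair, inner_sub_left]; ring

lemma pair_smul (t : ℝ) (x a : E) : pair (t • x) a = t * pair x a := by
  simp only [pair, real_inner_smul_left]; ring

lemma pair_neg_right (x a : E) : pair x (-a) = - pair x a := by
  simp only [pair, inner_neg_right, inner_neg_left, neg_neg]; ring

lemma pair_mul_inner (x a : E) : pair x a * ⟪a, a⟫ = 2 * ⟪x, a⟫ := by
  rcases eq_or_ne a 0 with rfl | h
  · simp
  · have : ⟪a, a⟫ ≠ 0 := inner_self_ne_zero.mpr h
    simp only [pair]; field_simp

lemma pair_pos_iff {x a : E} (h : a ≠ 0) : 0 < pair x a ↔ 0 < ⟪x, a⟫ := by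
  have h1 : 0 < ⟪a, a⟫ := real_inner_self_pos.mpr h
  have h2 := pair_mul_inner x a
  constructor
  · intro h3
    have := mul_pos h3 h1
    linarith
  · intro h3
    by_contra h4
    have := mul_nonpos_of_nonpos_of_nonneg (not_lt.mp h4) h1.le
    linarith

lemma pair_self {a : E} (h : a ≠ 0) : pair a a = 2 := by
  have : ⟪a, a⟫ ≠ 0 := inner_self_ne_zero.mpr h
  simp only [pair]; field_simp

/-- The reflection `s_α : x ↦ x - ⟨x, α∨⟩ α`; for `α = 0` the junk value of `pair` makes it the
identity, so that no hypothesis on `α` is required. -/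
noncomputable def sref (a : E) : E ≃ₗ[ℝ] E :=
  LinearEquiv.ofInvolutive
    { toFun := fun x => x - pair x a • a
      map_add' := fun x y => by simp only [pair_add, add_smul]; abel
      map_smul' := fun t x => by
        simp only [pair_smul, RingHom.id_apply, smul_sub, mul_smul] }
    (fun x => by
      show (x - pair x a • a) - pair (x - pair x a • a) a • a = x
      rcases eq_or_ne a 0 with rfl | h
      · simp
      · rw [pair_sub, pair_smul, pair_self h]; module)

lemma sref_apply (a x : E) : sref a x = x - pair x a • a := rfl

lemma sref_sref (a x : E) : sref a (sref a x) = x :=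
  (sref a).left_inv x

lemma sref_mul_self (a : E) : sref a * sref a = 1 :=
  LinearEquiv.ext fun x => sref_sref a x

lemma sref_self {a : E} (h : a ≠ 0) : sref a a = -a := by
  rw [sref_apply, pair_self h]; module

lemma inner_sref (a x y : E) : ⟪sref a x, sref a y⟫ = ⟪x, y⟫ := by
  simp only [sref_apply, inner_sub_left, inner_sub_right, real_inner_smul_left,
    real_inner_smul_right]
  have h1 := pair_mul_inner x a
  have h2 := pair_mul_inner y a
  rw [real_inner_comm a y] at *
  linear_combination (pair y a) / 2 * h1 + (pair x a) / 2 * h2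

lemma eq_sref {w : E ≃ₗ[ℝ] E} {a : E} (h : ∀ x, w x = x - pair x a • a) : w = sref a :=
  LinearEquiv.ext h

lemma sref_mem_weyl {Φ : Finset E} {a : E} (h : a ∈ Φ) : sref a ∈ Weyl Φ :=
  Subgroup.subset_closure ⟨a, h, fun _ => rfl⟩

lemma weyl_mono {Φ Ψ : Finset E} (h : Φ ⊆ Ψ) : Weyl Φ ≤ Weyl Ψ :=
  Subgroup.closure_mono fun _ ⟨a, ha, hw⟩ => ⟨a, h ha, hw⟩

lemma weyl_inner {Φ : Finset E} {w : E ≃ₗ[ℝ] E} (hw : w ∈ Weyl Φ) :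
    ∀ x y, ⟪w x, w y⟫ = ⟪x, y⟫ := by
  induction hw using Subgroup.closure_induction with
  | mem w h =>
    obtain ⟨a, -, h⟩ := h
    rw [eq_sref h]; exact inner_sref a
  | one => intro x y; rfl
  | mul u v _ _ hu hv => intro x y; rw [LinearEquiv.mul_apply, LinearEquiv.mul_apply, hu, hv]
  | inv u _ hu =>
    intro x y
    rw [← hu, ← LinearEquiv.mul_apply, ← LinearEquiv.mul_apply, mul_inv_cancel]; rfl

lemma weyl_pair {Φ : Finset E} {w : E ≃ₗ[ℝ] E} (hw : w ∈ Weyl Φ) (x y : E) :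
    pair (w x) (w y) = pair x y := by
  simp only [pair, weyl_inner hw]

lemma weyl_mem_iff {Φ : Finset E} (hΦ : IsRootSystem Φ) {w : E ≃ₗ[ℝ] E} (hw : w ∈ Weyl Φ) :
    ∀ b, w b ∈ Φ ↔ b ∈ Φ := by
  induction hw using Subgroup.closure_induction with
  | mem w h =>
    obtain ⟨a, ha, h⟩ := h
    rw [eq_sref h]
    intro b
    refine ⟨fun hb => ?_, fun hb => hΦ.reflect_mem a ha b hb⟩
    rw [← sref_sref a b]
    exact hΦ.reflect_mem a ha _ hb
  | one => intro b; rfl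
  | mul u v _ _ hu hv => intro b; rw [LinearEquiv.mul_apply, hu, hv]
  | inv u _ hu =>
    intro b
    rw [← hu, ← LinearEquiv.mul_apply, mul_inv_cancel]; rfl

lemma inv_apply_self' (u : E ≃ₗ[ℝ] E) (x : E) : u⁻¹ (u x) = x := by
  rw [← LinearEquiv.mul_apply, inv_mul_cancel]; rfl

lemma apply_inv_self' (u : E ≃ₗ[ℝ] E) (x : E) : u (u⁻¹ x) = x := by
  rw [← LinearEquiv.mul_apply, mul_inv_cancel]; rfl

lemma weyl_conj {Φ : Finset E} {w : E ≃ₗ[ℝ] E} (hw : w ∈ Weyl Φ) (a : E) :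
    w * sref a = sref (w a) * w := by
  ext x
  simp only [LinearEquiv.mul_apply, sref_apply, map_sub, map_smul, weyl_pair hw]

lemma neg_mem_roots {Φ : Finset E} (hΦ : IsRootSystem Φ) {b : E} (hb : b ∈ Φ) : -b ∈ Φ := by
  have := hΦ.reflect_mem b hb b hb
  rwa [← sref_apply, sref_self (hΦ.ne_zero b hb)] at this

/-! ### Positive roots -/

lemma mem_pos {Φ Δ : Finset E} {b : E} :
    b ∈ posRoots Φ Δ ↔ b ∈ Φ ∧ ∃ c : E → ℕ, b = ∑ α ∈ Δ, (c α : ℝ) • α := by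
  classical
  simp [posRoots]

/-- Linear functionals on `E` can be prescribed arbitrarily on the base. -/
lemma exists_functional {Φ Δ : Finset E} (hΔ : IsBase Φ Δ) (g : E → ℝ) :
    ∃ f : E →ₗ[ℝ] ℝ, ∀ a ∈ Δ, f a = g a := by
  obtain ⟨f, hf⟩ := (((Module.Basis.span hΔ.indep).constr ℝ
    (fun a : {x // x ∈ Δ} => g a)) : _ →ₗ[ℝ] ℝ).exists_extend
  refine ⟨f, fun a ha => ?_⟩
  have h1 := LinearMap.congr_fun hf (Module.Basis.span hΔ.indep ⟨a, ha⟩)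
  rw [Module.Basis.constr_basis] at h1
  rw [← h1]
  simp [Module.Basis.span_apply]

lemma pos_or_neg {Φ Δ : Finset E} (hΦ : IsRootSystem Φ) (hΔ : IsBase Φ Δ) {b : E} (hb : b ∈ Φ) :
    b ∈ posRoots Φ Δ ∨ -b ∈ posRoots Φ Δ := by
  rcases hΔ.root_decomp b hb with h | ⟨c, h⟩
  · exact Or.inl (mem_pos.mpr ⟨hb, h⟩)
  · exact Or.inr (mem_pos.mpr ⟨neg_mem_roots hΦ hb, c, by rw [h, neg_neg]⟩)

lemma simple_pos {Φ Δ : Finset E} (hΔ : IsBase Φ Δ) {a : E} (ha : a ∈ Δ) :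
    a ∈ posRoots Φ Δ := by
  classical
  refine mem_pos.mpr ⟨hΔ.subset ha, fun x => if x = a then 1 else 0, ?_⟩
  simp [ha]

lemma functional_nonneg {Φ Δ : Finset E} {f : E →ₗ[ℝ] ℝ} (hf : ∀ a ∈ Δ, 0 ≤ f a)
    {b : E} (hb : b ∈ posRoots Φ Δ) : 0 ≤ f b := by
  obtain ⟨-, c, rfl⟩ := mem_pos.mp hb
  rw [map_sum]
  refine Finset.sum_nonneg fun a ha => ?_
  rw [map_smul, smul_eq_mul]
  exact mul_nonneg (Nat.cast_nonneg _) (hf a ha)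

/-- If every functional that is nonnegative on `Δ` and vanishes at the simple root `a` vanishes at
the positive root `b`, then `b = a`: only the coefficient of `a` in `b` can be nonzero, and `Φ` is reduced. -/
lemma eq_simple {Φ Δ : Finset E} (hΦ : IsRootSystem Φ) (hΔ : IsBase Φ Δ) {a b : E}
    (ha : a ∈ Δ) (hb : b ∈ posRoots Φ Δ)
    (h : ∀ f : E →ₗ[ℝ] ℝ, (∀ d ∈ Δ, 0 ≤ f d) → f a = 0 → f b = 0) : b = a := by
  classical
  obtain ⟨hbΦ, c, hc⟩ := mem_pos.mp hb
  have h0 : ∀ e ∈ Δ, e ≠ a → (c e : ℝ) = 0 := by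
    intro e he hne
    obtain ⟨f, hf⟩ := exists_functional hΔ (fun x => if x = e then 1 else 0)
    have h1 := h f (fun d hd => by rw [hf d hd]; split_ifs <;> norm_num)
      (by rw [hf a ha, if_neg hne.symm])
    rw [hc, map_sum, Finset.sum_eq_single e] at h1
    · rw [map_smul, hf e he] at h1; simpa using h1
    · intro d hd hde; rw [map_smul, hf d hd]; simp [hde]
    · exact fun hh => absurd he hh
  have h2 : b = (c a : ℝ) • a := by
    rw [hc]
    refine Finset.sum_eq_single a (fun d hd hda => by rw [h0 d hd hda, zero_smul])
      (fun hh => absurd ha hh)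
  rcases hΦ.reduced a (hΔ.subset ha) (c a) (h2 ▸ hbΦ) with h3 | h3
  · rw [h2, h3, one_smul]
  · have : (0 : ℝ) ≤ (c a : ℝ) := Nat.cast_nonneg _
    linarith

lemma not_pos_neg {Φ Δ : Finset E} (hΦ : IsRootSystem Φ) (hΔ : IsBase Φ Δ) {b : E}
    (hb : b ∈ posRoots Φ Δ) (hb' : -b ∈ posRoots Φ Δ) : False := by
  obtain ⟨hbΦ, c, hc⟩ := mem_pos.mp hb
  obtain ⟨f, hf⟩ := exists_functional hΔ (fun _ => 1)
  have hf0 : ∀ a ∈ Δ, 0 ≤ f a := fun a ha => by rw [hf a ha]; exact zero_le_one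
  have h1 := functional_nonneg hf0 hb
  have h2 := functional_nonneg hf0 hb'
  rw [map_neg] at h2
  have h3 : f b = 0 := by linarith
  rw [hc, map_sum, Finset.sum_eq_zero_iff_of_nonneg] at h3
  · apply hΦ.ne_zero b hbΦ
    rw [hc]
    refine Finset.sum_eq_zero fun a ha => ?_
    have h4 := h3 a ha
    rw [map_smul, hf a ha, smul_eq_mul, mul_one] at h4
    rw [h4, zero_smul]
  · intro a ha
    rw [map_smul, hf a ha, smul_eq_mul, mul_one]
    exact Nat.cast_nonneg _

/-- A simple reflection `s_a` permutes the positive roots other than `a`. -/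
lemma sref_pos {Φ Δ : Finset E} (hΦ : IsRootSystem Φ) (hΔ : IsBase Φ Δ) {a b : E}
    (ha : a ∈ Δ) (hb : b ∈ posRoots Φ Δ) (hne : b ≠ a) : sref a b ∈ posRoots Φ Δ := by
  have hm : sref a b ∈ Φ := hΦ.reflect_mem a (hΔ.subset ha) b (mem_pos.mp hb).1
  refine (pos_or_neg hΦ hΔ hm).resolve_right fun hneg => hne ?_
  refine eq_simple hΦ hΔ ha hb fun f hf hfa => ?_
  have h1 := functional_nonneg hf hb
  have h2 := functional_nonneg hf hneg
  rw [sref_apply, map_neg, map_sub, map_smul, hfa, smul_zero] at h2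
  linarith

/-! ### Generation by simple reflections and simple transitivity -/

/-- Every positive root is conjugate to a simple root under the group generated by the simple
reflections, by induction on the height `h b` of the root. -/
lemma exists_conj_simple {Φ Δ : Finset E} (hΦ : IsRootSystem Φ) (hΔ : IsBase Φ Δ)
    (h : E →ₗ[ℝ] ℝ) (hh : ∀ a ∈ Δ, h a = 1) (n : ℕ) :
    ∀ b ∈ posRoots Φ Δ, h b ≤ n → ∃ v ∈ Weyl Δ, ∃ a ∈ Δ, v a = b := by
  have hnn : ∀ a ∈ Δ, 0 ≤ h a := fun a ha => by rw [hh a ha]; exact zero_le_one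
  induction n using Nat.strong_induction_on with
  | _ n ih =>
  intro b hb hn
  obtain ⟨hbΦ, c, hc⟩ := mem_pos.mp hb
  -- some simple root has positive inner product with `b`, since `⟪b, b⟫ > 0`
  obtain ⟨a, ha, hab⟩ : ∃ a ∈ Δ, 0 < ⟪b, a⟫ := by
    by_contra! hcon
    have h1 : 0 < ⟪b, b⟫ := real_inner_self_pos.mpr (hΦ.ne_zero b hbΦ)
    nth_rewrite 2 [hc] at h1
    rw [inner_sum] at h1
    refine absurd h1 (not_lt.mpr (Finset.sum_nonpos fun a ha => ?_))
    rw [real_inner_smul_right]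
    exact mul_nonpos_of_nonneg_of_nonpos (Nat.cast_nonneg _) (hcon a ha)
  by_cases hba : b = a
  · exact ⟨1, one_mem _, a, ha, hba.symm⟩
  have hs := sref_pos hΦ hΔ ha hb hba
  obtain ⟨k, hk⟩ := hΦ.pair_int a (hΔ.subset ha) b hbΦ
  have hkpos : 0 < pair b a := (pair_pos_iff (hΦ.ne_zero a (hΔ.subset ha))).mpr hab
  have hk1 : (1 : ℝ) ≤ pair b a := by
    rw [hk] at hkpos ⊢
    have : 0 < k := by exact_mod_cast hkpos
    exact_mod_cast this
  have hval : h (sref a b) = h b - pair b a := by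
    rw [sref_apply, map_sub, map_smul, hh a ha, smul_eq_mul, mul_one]
  have h0 := functional_nonneg hnn hs
  obtain ⟨m, rfl⟩ : ∃ m, n = m + 1 := by
    refine Nat.exists_eq_succ_of_ne_zero ?_
    rintro rfl
    rw [Nat.cast_zero] at hn
    linarith
  push_cast at hn
  obtain ⟨v, hv, d, hd, hvd⟩ := ih m (Nat.lt_succ_self m) (sref a b) hs (by linarith)
  refine ⟨sref a * v, mul_mem (sref_mem_weyl ha) hv, d, hd, ?_⟩
  rw [LinearEquiv.mul_apply, hvd, sref_sref]

lemma sref_neg (a : E) : sref (-a) = sref a := by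
  ext x
  rw [sref_apply, sref_apply, pair_neg_right, neg_smul_neg]

lemma weyl_le_weyl_base {Φ Δ : Finset E} (hΦ : IsRootSystem Φ) (hΔ : IsBase Φ Δ) :
    Weyl Φ ≤ Weyl Δ := by
  obtain ⟨h, hh⟩ := exists_functional hΔ (fun _ => 1)
  have key : ∀ b ∈ posRoots Φ Δ, sref b ∈ Weyl Δ := by
    intro b hb
    obtain ⟨n, hn⟩ := exists_nat_ge (h b)
    obtain ⟨v, hv, a, ha, rfl⟩ := exists_conj_simple hΦ hΔ h hh n b hb hn
    have : sref (v a) = v * sref a * v⁻¹ := by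
      rw [weyl_conj hv, mul_assoc, mul_inv_cancel, mul_one]
    rw [this]
    exact mul_mem (mul_mem hv (sref_mem_weyl ha)) (inv_mem hv)
  refine (Subgroup.closure_le _).mpr ?_
  rintro w ⟨b, hb, hw⟩
  rw [eq_sref hw]
  rcases pos_or_neg hΦ hΔ hb with h1 | h1
  · exact key b h1
  · rw [← sref_neg]; exact key _ h1

/-- The product of the simple reflections along a word. -/
noncomputable def wordProd (L : List E) : E ≃ₗ[ℝ] E := (L.map sref).prod

lemma wordProd_cons (a : E) (L : List E) : wordProd (a :: L) = sref a * wordProd L := by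
  simp [wordProd]

lemma wordProd_append (L M : List E) : wordProd (L ++ M) = wordProd L * wordProd M := by
  simp [wordProd]

lemma wordProd_mem {Δ : Finset E} (L : List E) (hL : ∀ a ∈ L, a ∈ Δ) : wordProd L ∈ Weyl Δ := by
  refine list_prod_mem fun w hw => ?_
  obtain ⟨a, ha, rfl⟩ := List.mem_map.mp hw
  exact sref_mem_weyl (hL a ha)

lemma wordProd_reverse (L : List E) : wordProd L.reverse = (wordProd L)⁻¹ := by
  induction L with
  | nil => simp [wordProd]
  | cons a L ih =>
    rw [List.reverse_cons, wordProd_append, ih, wordProd_cons a L, mul_inv_rev,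
      inv_eq_of_mul_eq_one_left (sref_mul_self a)]
    simp [wordProd]

lemma exists_word {Δ : Finset E} {w : E ≃ₗ[ℝ] E} (hw : w ∈ Weyl Δ) :
    ∃ L : List E, (∀ a ∈ L, a ∈ Δ) ∧ w = wordProd L := by
  induction hw using Subgroup.closure_induction with
  | mem w h =>
    obtain ⟨a, ha, h⟩ := h
    exact ⟨[a], by simpa using ha, by rw [eq_sref h]; simp [wordProd]⟩
  | one => exact ⟨[], by simp, by simp [wordProd]⟩
  | mul u v _ _ hu hv =>
    obtain ⟨L, hL, rfl⟩ := hu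
    obtain ⟨M, hM, rfl⟩ := hv
    refine ⟨L ++ M, fun a ha => ?_, (wordProd_append L M).symm⟩
    exact (List.mem_append.mp ha).elim (hL a) (hM a)
  | inv u _ hu =>
    obtain ⟨L, hL, rfl⟩ := hu
    exact ⟨L.reverse, fun a ha => hL a (List.mem_reverse.mp ha), (wordProd_reverse L).symm⟩

/-- Exchange: if `u = s₁ ⋯ sₖ` sends the simple root `a` to a negative root, then `u s_a` is the
product of a word of length `k - 1`. -/
lemma exchange {Φ Δ : Finset E} (hΦ : IsRootSystem Φ) (hΔ : IsBase Φ Δ) {a : E} (ha : a ∈ Δ)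
    (L : List E) : (∀ d ∈ L, d ∈ Δ) → wordProd L a ∉ posRoots Φ Δ →
      ∃ M : List E, (∀ d ∈ M, d ∈ Δ) ∧ M.length + 1 = L.length ∧
        wordProd L * sref a = wordProd M := by
  induction L with
  | nil =>
    intro _ h
    exact absurd (simple_pos hΔ ha) (by simpa [wordProd] using h)
  | cons e L ih =>
    intro hL h
    have hL' : ∀ d ∈ L, d ∈ Δ := fun d hd => hL d (List.mem_cons_of_mem _ hd)
    have he : e ∈ Δ := hL e List.mem_cons_self
    by_cases hp : wordProd L a ∈ posRoots Φ Δ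
    · -- the only positive root made negative by `s_e` is `e`, so `s_e` is conjugate to `s_a`
      have hea : wordProd L a = e := by
        by_contra hne
        apply h
        rw [wordProd_cons, LinearEquiv.mul_apply]
        exact sref_pos hΦ hΔ he hp hne
      refine ⟨L, hL', by simp, ?_⟩
      rw [wordProd_cons, mul_assoc, weyl_conj (wordProd_mem L hL'), hea, ← mul_assoc,
        sref_mul_self, one_mul]
    · obtain ⟨M, hM, hlen, hprod⟩ := ih hL' hp
      refine ⟨e :: M, ?_, by simp [hlen], ?_⟩
      · intro d hd
        rcases List.mem_cons.mp hd with rfl | hd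
        · exact he
        · exact hM d hd
      · rw [wordProd_cons, wordProd_cons, mul_assoc, hprod]

lemma eq_one_of_preserves_pos_word {Φ Δ : Finset E} (hΦ : IsRootSystem Φ) (hΔ : IsBase Φ Δ)
    (n : ℕ) : ∀ L : List E, L.length = n → (∀ d ∈ L, d ∈ Δ) →
      (∀ b ∈ posRoots Φ Δ, wordProd L b ∈ posRoots Φ Δ) → wordProd L = 1 := by
  induction n using Nat.strong_induction_on with
  | _ n ih =>
  intro L hn hL hpos
  rcases List.eq_nil_or_concat L with rfl | ⟨M, a, hMa⟩
  · simp [wordProd]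
  have hM : ∀ d ∈ M, d ∈ Δ := fun d hd => hL d (by simp [hMa, hd])
  have ha : a ∈ Δ := hL a (by simp [hMa])
  have hprod : wordProd L = wordProd M * sref a := by
    rw [hMa, List.concat_eq_append, wordProd_append]; simp [wordProd]
  have hneg : wordProd M a ∉ posRoots Φ Δ := by
    intro hcon
    have h1 := hpos a (simple_pos hΔ ha)
    rw [hprod, LinearEquiv.mul_apply, sref_self (hΦ.ne_zero a (hΔ.subset ha)), map_neg] at h1
    exact not_pos_neg hΦ hΔ hcon h1
  obtain ⟨N, hN, hlen, hN'⟩ := exchange hΦ hΔ ha M hM hneg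
  have hlt : N.length < n := by
    have : L.length = M.length + 1 := by rw [hMa]; simp
    omega
  rw [hprod, hN'] at hpos ⊢
  exact ih _ hlt N rfl hN hpos

/-- An element of the Weyl group that preserves the positive roots is the identity. -/
lemma eq_one_of_preserves_pos {Φ Δ : Finset E} (hΦ : IsRootSystem Φ) (hΔ : IsBase Φ Δ)
    {u : E ≃ₗ[ℝ] E} (hu : u ∈ Weyl Φ) (hpos : ∀ b ∈ posRoots Φ Δ, u b ∈ posRoots Φ Δ) :
    u = 1 := by
  obtain ⟨L, hL, rfl⟩ := exists_word (weyl_le_weyl_base hΦ hΔ hu)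
  exact eq_one_of_preserves_pos_word hΦ hΔ _ L rfl hL hpos

/-- The stabilizer in `W` of a point of the open dominant chamber is trivial. -/
lemma eq_one_of_fixes_regular {Φ Δ : Finset E} (hΦ : IsRootSystem Φ) (hΔ : IsBase Φ Δ)
    {x : E} (hx : ∀ b ∈ posRoots Φ Δ, 0 < ⟪x, b⟫) {u : E ≃ₗ[ℝ] E} (hu : u ∈ Weyl Φ)
    (hux : u x = x) : u = 1 := by
  refine eq_one_of_preserves_pos hΦ hΔ hu fun b hb => ?_
  have hm : u b ∈ Φ := (weyl_mem_iff hΦ hu b).mpr (mem_pos.mp hb).1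
  refine (pos_or_neg hΦ hΔ hm).resolve_right fun hneg => ?_
  have h1 := hx _ hneg
  have h2 := weyl_inner hu x b
  rw [hux] at h2
  rw [inner_neg_right, h2] at h1
  linarith [hx b hb]

/-! ### Minuscule elements of the root lattice -/

lemma exists_list_sum {Φ : Finset E} (hΦ : IsRootSystem Φ) {s : E} (hs : s ∈ rootLattice Φ) :
    ∃ L : List E, (∀ b ∈ L, b ∈ Φ) ∧ s = L.sum := by
  induction hs using AddSubgroup.closure_induction with
  | mem x hx => exact ⟨[x], by simpa using hx, by simp⟩
  | zero => exact ⟨[], by simp, by simp⟩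
  | add x y _ _ hx hy =>
    obtain ⟨L, hL, rfl⟩ := hx
    obtain ⟨M, hM, rfl⟩ := hy
    refine ⟨L ++ M, fun a ha => ?_, by simp⟩
    exact (List.mem_append.mp ha).elim (hL a) (hM a)
  | neg x _ hx =>
    obtain ⟨L, hL, rfl⟩ := hx
    refine ⟨L.map (fun b => -b), fun a ha => ?_, ?_⟩
    · obtain ⟨b, hb, rfl⟩ := List.mem_map.mp ha
      exact neg_mem_roots hΦ (hL b hb)
    · exact L.sum_neg

lemma pair_rootLattice_int {Φ : Finset E} (hΦ : IsRootSystem Φ) {s : E}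
    (hs : s ∈ rootLattice Φ) {b : E} (hb : b ∈ Φ) : ∃ n : ℤ, pair s b = n := by
  induction hs using AddSubgroup.closure_induction with
  | mem x hx => exact hΦ.pair_int b hb x hx
  | zero => exact ⟨0, by simp [pair]⟩
  | add x y _ _ hx hy =>
    obtain ⟨m, hm⟩ := hx
    obtain ⟨n, hn⟩ := hy
    exact ⟨m + n, by rw [pair_add, hm, hn]; push_cast; rfl⟩
  | neg x _ hx =>
    obtain ⟨m, hm⟩ := hx
    exact ⟨-m, by rw [← neg_one_smul ℝ, pair_smul, hm]; push_cast; ring⟩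

lemma exists_inner_pos_of_sum (s : E) (L : List E) (h : 0 < ⟪s, L.sum⟫) :
    ∃ b ∈ L, 0 < ⟪s, b⟫ := by
  induction L with
  | nil => simp at h
  | cons a L ih =>
    rw [List.sum_cons, inner_add_right] at h
    by_cases ha : 0 < ⟪s, a⟫
    · exact ⟨a, List.mem_cons_self, ha⟩
    · obtain ⟨b, hb, hb'⟩ := ih (by linarith)
      exact ⟨b, List.mem_cons_of_mem _ hb, hb'⟩

/-- A sum of `n` roots all of whose pairings with coroots are less than `2` is zero: otherwise
some summand `b` satisfies `⟨s, b∨⟩ = 1`, and `s - b = s_b(s)` is a shorter sum of roots with the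
same property. -/
lemma minuscule_aux {Φ : Finset E} (hΦ : IsRootSystem Φ) (n : ℕ) :
    ∀ L : List E, L.length = n → (∀ b ∈ L, b ∈ Φ) →
      (∀ b ∈ Φ, pair L.sum b < 2) → L.sum = 0 := by
  classical
  induction n with
  | zero => intro L hn _ _; rw [List.length_eq_zero_iff.mp hn]; simp
  | succ n ih =>
    intro L hn hL hlt
    by_contra hne
    obtain ⟨b, hb, hpos⟩ := exists_inner_pos_of_sum L.sum L (real_inner_self_pos.mpr hne)
    have hbΦ := hL b hb
    have hpp : 0 < pair L.sum b := (pair_pos_iff (hΦ.ne_zero b hbΦ)).mpr hpos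
    have hmem : L.sum ∈ rootLattice Φ :=
      list_sum_mem fun a ha => AddSubgroup.subset_closure (hL a ha)
    obtain ⟨k, hk⟩ := pair_rootLattice_int hΦ hmem hbΦ
    have hone : pair L.sum b = 1 := by
      have h2 := hlt b hbΦ
      rw [hk] at hpp h2 ⊢
      have h3 : 0 < k := by exact_mod_cast hpp
      have h4 : k < 2 := by exact_mod_cast h2
      have : k = 1 := by omega
      rw [this]; norm_num
    have hsum : (L.erase b).sum = sref b L.sum := by
      rw [sref_apply, hone, one_smul, ← List.sum_erase hb]; abel
    have hz := ih (L.erase b) (by rw [List.length_erase_of_mem hb, hn]; rfl)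
      (fun a ha => hL a (List.mem_of_mem_erase ha)) (by
        intro d hd
        rw [hsum, ← weyl_pair (sref_mem_weyl hbΦ), sref_sref]
        exact hlt _ (hΦ.reflect_mem b hbΦ d hd))
    rw [hsum] at hz
    exact hne ((map_eq_zero_iff _ (sref b).injective).mp hz)

lemma eq_zero_of_minuscule {Φ : Finset E} (hΦ : IsRootSystem Φ) {s : E}
    (hs : s ∈ rootLattice Φ) (h : ∀ b ∈ Φ, pair s b < 2) : s = 0 := by
  obtain ⟨L, hL, rfl⟩ := exists_list_sum hΦ hs
  exact minuscule_aux hΦ _ L rfl hL h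

/-! ### Parabolic subgroups -/

lemma rootLattice_weyl {J : Finset E} {Φ : Finset E} (hΦ : IsRootSystem Φ) (hJ : J ⊆ Φ) {a b : E}
    (ha : a ∈ J) (hb : b ∈ Φ) : b - sref a b ∈ rootLattice J := by
  obtain ⟨n, hn⟩ := hΦ.pair_int a (hJ ha) b hb
  rw [sref_apply, sub_sub_cancel, hn, Int.cast_smul_eq_zsmul]
  exact zsmul_mem (AddSubgroup.subset_closure ha) n

/-- `W_J` acts trivially on `Φ` modulo the lattice `ℤJ`. -/
lemma weylJ_sub_mem {Φ J : Finset E} (hΦ : IsRootSystem Φ) (hJ : J ⊆ Φ) {w : E ≃ₗ[ℝ] E}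
    (hw : w ∈ Weyl J) : ∀ b ∈ Φ, b - w b ∈ rootLattice J := by
  induction hw using Subgroup.closure_induction with
  | mem w h =>
    obtain ⟨a, ha, h⟩ := h
    rw [eq_sref h]
    exact fun b hb => rootLattice_weyl hΦ hJ ha hb
  | one => intro b _; simp
  | mul u v _ hv' hu hv =>
    intro b hb
    have hvb : v b ∈ Φ := (weyl_mem_iff hΦ (weyl_mono hJ hv') b).mpr hb
    have := add_mem (hv b hb) (hu _ hvb)
    rwa [sub_add_sub_cancel] at this
  | inv u hu' hu =>
    intro b hb
    have hub : u⁻¹ b ∈ Φ := (weyl_mem_iff hΦ (weyl_mono hJ (inv_mem hu')) b).mpr hb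
    have := neg_mem (hu _ hub)
    rwa [apply_inv_self', neg_sub] at this

/-- `W_J` preserves the set of positive roots outside `Φ_J`. -/
lemma weylJ_pos {Φ Δ J : Finset E} (hΦ : IsRootSystem Φ) (hΔ : IsBase Φ Δ) (hJ : J ⊆ Δ)
    {w : E ≃ₗ[ℝ] E} (hw : w ∈ Weyl J) :
    ∀ b ∈ posRoots Φ Δ, b ∉ rootLattice J → w b ∈ posRoots Φ Δ := by
  obtain ⟨L, hL, rfl⟩ := exists_word hw
  clear hw
  induction L with
  | nil => intro b hb _; simpa [wordProd] using hb
  | cons a L ih =>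
    intro b hb hbJ
    have hL' : ∀ d ∈ L, d ∈ J := fun d hd => hL d (List.mem_cons_of_mem _ hd)
    have ha : a ∈ J := hL a List.mem_cons_self
    rw [wordProd_cons, LinearEquiv.mul_apply]
    refine sref_pos hΦ hΔ (hJ ha) (ih hL' b hb hbJ) fun heq => hbJ ?_
    have h1 := weylJ_sub_mem hΦ (hJ.trans hΔ.subset) (wordProd_mem L hL') b (mem_pos.mp hb).1
    rw [heq] at h1
    have h2 : a ∈ rootLattice J := AddSubgroup.subset_closure ha
    simpa using add_mem h1 h2

/-- Let `p` be a positive integer, `J ⊆ Δ`, `λ ∈ C_ℤ`,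
`w₁, w₂ ∈ ᴶW`, `w ∈ W_J`, and `σ ∈ ℤΦ`.  If `w₁·λ = (w w₂)·λ + pσ`, then
`σ = 0`, `w = 1`, and `w₁ = w₂`.  (Here `W_J = Weyl J` is the parabolic subgroup
generated by the reflections in the simple roots belonging to `J`.) -/
theorem statement7
    (Φ Δ : Finset E) (hΦ : IsRootSystem Φ) (hΔ : IsBase Φ Δ)
    (p : ℕ) (hp : 0 < p)
    (J : Finset E) (hJ : J ⊆ Δ)
    (lam : E) (hlam : lam ∈ bottomAlcove Φ Δ p)
    (w₁ w₂ : E ≃ₗ[ℝ] E) (hw₁W : w₁ ∈ Weyl Φ) (hw₂W : w₂ ∈ Weyl Φ)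
    (hw₁J : ∀ β ∈ posRoots Φ Δ, β ∈ rootLattice J → w₁.symm β ∈ posRoots Φ Δ)
    (hw₂J : ∀ β ∈ posRoots Φ Δ, β ∈ rootLattice J → w₂.symm β ∈ posRoots Φ Δ)
    (w : E ≃ₗ[ℝ] E) (hw : w ∈ Weyl J)
    (σ : E) (hσ : σ ∈ rootLattice Φ)
    (heq : dotAct Φ Δ w₁ lam = dotAct Φ Δ (w * w₂) lam + (p : ℝ) • σ) :
    σ = 0 ∧ w = 1 ∧ w₁ = w₂ := by
  set x := lam + rho Φ Δ with hx
  have hpR : (0 : ℝ) < p := by exact_mod_cast hp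
  have hJΦ : J ⊆ Φ := hJ.trans hΔ.subset
  have hwW : w ∈ Weyl Φ := weyl_mono hJΦ hw
  have hxeq : w₁ x = (w * w₂) x + (p : ℝ) • σ := by
    have h1 : w₁ x - rho Φ Δ = (w * w₂) x - rho Φ Δ + (p : ℝ) • σ := heq
    have h2 := congrArg (· + rho Φ Δ) h1
    simp only [sub_add_cancel] at h2
    rw [h2]; abel
  have hreg : ∀ b ∈ posRoots Φ Δ, 0 < ⟪x, b⟫ := fun b hb =>
    (pair_pos_iff (hΦ.ne_zero b (mem_pos.mp hb).1)).mp (hlam.2 b hb).1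
  have habs : ∀ b ∈ Φ, |pair x b| < p := by
    intro b hb
    rw [abs_lt]
    rcases pos_or_neg hΦ hΔ hb with h | h
    · have := hlam.2 b h
      rw [← hx] at this
      constructor <;> linarith
    · have := hlam.2 _ h
      rw [← hx, pair_neg_right] at this
      constructor <;> linarith
  have habs' : ∀ u ∈ Weyl Φ, ∀ b ∈ Φ, |pair (u x) b| < p := by
    intro u hu b hb
    rw [← weyl_pair (inv_mem hu), inv_apply_self']
    exact habs _ ((weyl_mem_iff hΦ (inv_mem hu) b).mpr hb)
  have hσ0 : σ = 0 := by
    refine eq_zero_of_minuscule hΦ hσ fun b hb => ?_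
    have h1 := abs_lt.mp (habs' w₁ hw₁W b hb)
    have h2 := abs_lt.mp (habs' (w * w₂) (mul_mem hwW hw₂W) b hb)
    rw [hxeq, pair_add, pair_smul] at h1
    have h3 : (p : ℝ) * pair σ b < p * 2 := by linarith [h1.2, h2.1]
    exact lt_of_mul_lt_mul_left h3 hpR.le
  have hprod : w₁ = w * w₂ := by
    have hu : w₁⁻¹ * (w * w₂) = 1 := by
      refine eq_one_of_fixes_regular hΦ hΔ hreg
        (mul_mem (inv_mem hw₁W) (mul_mem hwW hw₂W)) ?_
      rw [hσ0, smul_zero, add_zero] at hxeq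
      rw [LinearEquiv.mul_apply, ← hxeq, inv_apply_self']
    exact inv_mul_eq_one.mp hu
  have hw1 : w = 1 := by
    refine eq_one_of_preserves_pos hΦ hΔ hwW fun b hb => ?_
    by_cases hbJ : b ∈ rootLattice J
    · have hbΦ := (mem_pos.mp hb).1
      have hm : w b ∈ Φ := (weyl_mem_iff hΦ hwW b).mpr hbΦ
      refine (pos_or_neg hΦ hΔ hm).resolve_right fun hneg => ?_
      have hmJ : w b ∈ rootLattice J := by
        have := sub_mem hbJ (weylJ_sub_mem hΦ hJΦ hw b hbΦ)
        rwa [sub_sub_cancel] at this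
      have h1 := hw₁J _ hneg (neg_mem hmJ)
      have h2 := hw₂J b hb hbJ
      have h3 : w₁.symm (w b) = w₂.symm b := by
        rw [LinearEquiv.symm_apply_eq, hprod, LinearEquiv.mul_apply, LinearEquiv.apply_symm_apply]
      rw [map_neg, h3] at h1
      exact not_pos_neg hΦ hΔ h2 h1
    · exact weylJ_pos hΦ hΔ hJ hw b hb hbJ
  exact ⟨hσ0, hw1, by rw [hprod, hw1, one_mul]⟩

end PaperDNN
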